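/- Let ν be the standard Gaussian on ℝ^d and B₁, ..., B_K measurable cells partitioning ℝ^d with ν(B_i) = 1/K for all i, K ≥ 5. Then E_{z~ν}[dist(z, complement of cell containing z)] ≤ log(4π log K)/√(2 log K). -/

import Mathlib

open Real Set MeasureTheory ProbabilityTheory

/-- The standard normal cumulative distribution function. -/
noncomputable def Phi (x : ℝ) : ℝ :=
  (Real.sqrt (2 * π))⁻¹ * ∫ u in Set.Iic x, Real.exp (-u ^ 2 / 2)

/-- The inverse of the standard normal cdf. -/
noncomputable def PhiInv : ℝ → ℝ := Function.invFun Phi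

/-- The standard Gaussian measure `N(0, I_d)` on `ℝ^d`. -/
noncomputable def stdGaussian (d : ℕ) : Measure (Fin d → ℝ) :=
  Measure.pi fun _ => gaussianReal 0 1

/-- The Euclidean (ℓ₂) norm on `ℝ^d`. -/
noncomputable def l2 {d : ℕ} (z : Fin d → ℝ) : ℝ := Real.sqrt (∑ i, z i ^ 2)

/-- The ℓ₂ distance from a point to a set. -/
noncomputable def distSet {d : ℕ} (z : Fin d → ℝ) (A : Set (Fin d → ℝ)) : ℝ :=
  sInf {t | ∃ z' ∈ A, t = l2 (z - z')}

/-!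
For a cell `B` of Gaussian measure at most `p`, the distance `f` to `Bᶜ` is a nonnegative
`1`-Lipschitz function vanishing off `B`, and it suffices to show that its mean over `B` is at most
`2 / √(2 log p⁻¹)`; averaging over the cells then gives the theorem.

The Prékopa–Leindler inequality passes from Lebesgue measure on the line to Gaussian measures with
an extra factor `exp (-l (1 - l) ‖x - y‖² / 2)`, and this form tensorizes. With one of the three
functions constant it becomes a hypercontractive bound `∫ G ^ (1 + t) ≤ (∫ F) ^ (1 + t)` whenever
`G x ≤ F y * exp (‖x - y‖² / (2 t))`. For the Lipschitz `f` one may take `G = f ^ k` and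
`F = (f ² + k t) ^ (k / 2)`. Comparing derivatives at `t = 0` is a log-Sobolev argument: for `k > 2`
the complement of `B` contributes only `(k t) ^ (k / 2) = o(t)`, so the small measure of `B` bounds
the mean of `f ^ k` over `B`. Letting `k` decrease to `2` gives the constant.
-/

open scoped ENNReal NNReal Pointwise Topology

section PrekopaLeindler

theorem volume_add_volume_le_volume_add_of_isCompact {A B : Set ℝ} (hA : IsCompact A)
    (hB : IsCompact B) (hA₀ : A.Nonempty) (hB₀ : B.Nonempty) :
    volume A + volume B ≤ volume (A + B) := by
  obtain ⟨a, ha⟩ := hA.exists_isGreatest hA₀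
  obtain ⟨b, hb⟩ := hB.exists_isLeast hB₀
  -- The two translates meet only at `max A + min B`.
  have hdisj : AEDisjoint volume (A + {b}) ({a} + B) := by
    refine measure_mono_null (t := {a + b}) ?_ (measure_singleton _)
    rintro _ ⟨⟨x, hx, _, rfl, rfl⟩, _, rfl, y, hy, hxy⟩
    simp only [mem_singleton_iff]
    linarith [ha.2 hx, hb.2 hy]
  calc volume A + volume B = volume (A + {b}) + volume ({a} + B) := by simp
    _ = volume ((A + {b}) ∪ ({a} + B)) :=
      (measure_union₀ (isCompact_singleton.add hB).measurableSet.nullMeasurableSet hdisj).symm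
    _ ≤ volume (A + B) := measure_mono <| union_subset
      (add_subset_add_left (singleton_subset_iff.2 hb.1))
      (add_subset_add_right (singleton_subset_iff.2 ha.1))

theorem volume_add_volume_le_volume_add {A B : Set ℝ} (hA : MeasurableSet A)
    (hB : MeasurableSet B) (hA₀ : A.Nonempty) (hB₀ : B.Nonempty) :
    volume A + volume B ≤ volume (A + B) := by
  obtain ⟨a, ha⟩ := hA₀
  obtain ⟨b, hb⟩ := hB₀
  simp only [hA.measure_eq_iSup_isCompact, hB.measure_eq_iSup_isCompact, iSup_and']
  refine ENNReal.biSup_add_biSup_le' ⟨∅, empty_subset _, isCompact_empty⟩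
    ⟨∅, empty_subset _, isCompact_empty⟩ fun S ⟨hSA, hS⟩ T ⟨hTB, hT⟩ => ?_
  calc volume S + volume T ≤ volume (insert a S) + volume (insert b T) := by
        gcongr <;> exact subset_insert _ _
    _ ≤ volume (insert a S + insert b T) :=
      volume_add_volume_le_volume_add_of_isCompact (hS.insert a) (hT.insert b)
        (insert_nonempty _ _) (insert_nonempty _ _)
    _ ≤ volume (A + B) := by
        gcongr <;> exact insert_subset ‹_› ‹_›

theorem measurable_meas_ofReal_lt {α : Type*} [MeasurableSpace α] (μ : Measure α)
    (u : α → ℝ≥0∞) : Measurable fun s : ℝ => μ {x | ENNReal.ofReal s < u x} :=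
  Antitone.measurable fun _ _ hst => measure_mono fun _ hx =>
    (ENNReal.ofReal_le_ofReal hst).trans_lt hx

theorem lintegral_min_one_eq_setLIntegral_meas_lt {α : Type*} [MeasurableSpace α] (μ : Measure α)
    {u : α → ℝ≥0∞} (hu : Measurable u) :
    ∫⁻ x, min (u x) 1 ∂μ = ∫⁻ s in Ioo (0 : ℝ) 1, μ {x | ENNReal.ofReal s < u x} := by
  have hu_top : ∀ x, min (u x) 1 ≠ ⊤ := fun x =>
    ne_top_of_le_ne_top ENNReal.one_ne_top (min_le_right _ _)
  have hlevel : ∀ s : ℝ, 0 < s → {x | s < (min (u x) 1).toReal} =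
      {x | ENNReal.ofReal s < u x ∧ s < 1} := fun s hs => by
    ext x
    rw [mem_ofPred_eq, ← ENNReal.ofReal_lt_iff_lt_toReal hs.le (hu_top x), lt_min_iff,
      ENNReal.ofReal_lt_one, mem_ofPred_eq]
  calc ∫⁻ x, min (u x) 1 ∂μ
      = ∫⁻ x, ENNReal.ofReal (min (u x) 1).toReal ∂μ := by
        simp only [ENNReal.ofReal_toReal (hu_top _)]
    _ = ∫⁻ s in Ioi (0 : ℝ), μ {x | s < (min (u x) 1).toReal} :=
        lintegral_eq_lintegral_meas_lt μ (.of_forall fun _ => ENNReal.toReal_nonneg) (by fun_prop)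
    _ = ∫⁻ s in Ioi (0 : ℝ), (Iio 1).indicator (fun s => μ {x | ENNReal.ofReal s < u x}) s :=
        setLIntegral_congr_fun measurableSet_Ioi fun s hs => by
          by_cases hs₁ : s < 1 <;> simp [hlevel s hs, hs₁]
    _ = ∫⁻ s in Ioo (0 : ℝ) 1, μ {x | ENNReal.ofReal s < u x} := by
        rw [setLIntegral_indicator measurableSet_Iio, inter_comm, Ioi_inter_Iio]

theorem ofReal_mul_volume_setOf_lt_add_le {l : ℝ} (hl₀ : 0 < l) (hl₁ : l < 1) {f g h : ℝ → ℝ≥0∞}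
    (hf : Measurable f) (hg : Measurable g)
    (hfgh : ∀ x y, f x ^ l * g y ^ (1 - l) ≤ h (l • x + (1 - l) • y)) {s : ℝ≥0∞}
    (hs₀ : s ≠ 0) (hs : s ≠ ⊤) (hsf : ∃ x, s < f x) (hsg : ∃ x, s < g x) :
    ENNReal.ofReal l * volume {x | s < f x} + ENNReal.ofReal (1 - l) * volume {x | s < g x} ≤
      volume {x | s < h x} := by
  have hl' : 0 < 1 - l := sub_pos.2 hl₁
  have hvol : ∀ {c : ℝ}, 0 < c → ∀ A : Set ℝ, volume (c • A) = ENNReal.ofReal c * volume A :=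
    fun hc A => by simp [Measure.addHaar_smul, abs_of_pos hc]
  have hsub : l • {x | s < f x} + (1 - l) • {x | s < g x} ⊆ {x | s < h x} := by
    rintro _ ⟨_, ⟨x, hx, rfl⟩, _, ⟨y, hy, rfl⟩, rfl⟩
    calc s = s ^ l * s ^ (1 - l) := by
          rw [← ENNReal.rpow_add _ _ hs₀ hs, add_sub_cancel, ENNReal.rpow_one]
      _ < f x ^ l * g y ^ (1 - l) :=
          ENNReal.mul_lt_mul (ENNReal.rpow_lt_rpow hx hl₀) (ENNReal.rpow_lt_rpow hy hl')
      _ ≤ h (l • x + (1 - l) • y) := hfgh x y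
  rw [← hvol hl₀, ← hvol hl']
  exact (volume_add_volume_le_volume_add ((measurableSet_lt measurable_const hf).const_smul₀ l)
    ((measurableSet_lt measurable_const hg).const_smul₀ (1 - l)) (Nonempty.smul_set hsf)
    (Nonempty.smul_set hsg)).trans (measure_mono hsub)

theorem ofReal_mul_lintegral_add_le_of_iSup_eq_one {l : ℝ} (hl₀ : 0 < l) (hl₁ : l < 1)
    {f g h : ℝ → ℝ≥0∞} (hf : Measurable f) (hg : Measurable g) (hh : Measurable h)
    (hf₁ : ⨆ x, f x = 1) (hg₁ : ⨆ x, g x = 1)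
    (hfgh : ∀ x y, f x ^ l * g y ^ (1 - l) ≤ h (l • x + (1 - l) • y)) :
    ENNReal.ofReal l * (∫⁻ x, f x) + ENNReal.ofReal (1 - l) * (∫⁻ x, g x) ≤ ∫⁻ x, h x := by
  have hlayer : ∀ {u : ℝ → ℝ≥0∞}, Measurable u → ⨆ x, u x = 1 →
      ∫⁻ x, u x = ∫⁻ s in Ioo (0 : ℝ) 1, volume {x | ENNReal.ofReal s < u x} := fun hu hu₁ => by
    rw [← lintegral_min_one_eq_setLIntegral_meas_lt volume hu]
    exact lintegral_congr fun x => (min_eq_left (hu₁ ▸ le_iSup _ x)).symm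
  calc ENNReal.ofReal l * (∫⁻ x, f x) + ENNReal.ofReal (1 - l) * (∫⁻ x, g x)
      = ∫⁻ s in Ioo (0 : ℝ) 1, (ENNReal.ofReal l * volume {x | ENNReal.ofReal s < f x} +
          ENNReal.ofReal (1 - l) * volume {x | ENNReal.ofReal s < g x}) := by
        rw [lintegral_add_left ((measurable_meas_ofReal_lt _ _).const_mul _),
          lintegral_const_mul _ (measurable_meas_ofReal_lt _ _),
          lintegral_const_mul _ (measurable_meas_ofReal_lt _ _), ← hlayer hf hf₁, ← hlayer hg hg₁]
    _ ≤ ∫⁻ s in Ioo (0 : ℝ) 1, volume {x | ENNReal.ofReal s < h x} :=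
        setLIntegral_mono' measurableSet_Ioo fun s hs => by
          have hs₁ : ENNReal.ofReal s < 1 := ENNReal.ofReal_lt_one.2 hs.2
          exact ofReal_mul_volume_setOf_lt_add_le hl₀ hl₁ hf hg hfgh (ENNReal.ofReal_pos.2 hs.1).ne'
            ENNReal.ofReal_ne_top (lt_iSup_iff.1 (hf₁ ▸ hs₁)) (lt_iSup_iff.1 (hg₁ ▸ hs₁))
    _ = ∫⁻ x, min (h x) 1 := (lintegral_min_one_eq_setLIntegral_meas_lt volume hh).symm
    _ ≤ ∫⁻ x, h x := lintegral_mono fun x => min_le_left _ _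

theorem rpow_mul_rpow_le_ofReal_mul_add {l : ℝ} (hl₀ : 0 < l) (hl₁ : l < 1) (a b : ℝ≥0∞) :
    a ^ l * b ^ (1 - l) ≤ ENNReal.ofReal l * a + ENNReal.ofReal (1 - l) * b := by
  have hl' : 0 < 1 - l := sub_pos.2 hl₁
  have hconj : l⁻¹.HolderConjugate (1 - l)⁻¹ :=
    Real.holderConjugate_iff.2 ⟨(one_lt_inv₀ hl₀).2 hl₁, by rw [inv_inv, inv_inv, add_sub_cancel]⟩
  have hyoung := ENNReal.young_inequality (a ^ l) (b ^ (1 - l)) hconj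
  rwa [ENNReal.rpow_rpow_inv hl₀.ne', ENNReal.rpow_rpow_inv hl'.ne', ENNReal.ofReal_inv_of_pos hl₀,
    ENNReal.ofReal_inv_of_pos hl', div_eq_mul_inv, div_eq_mul_inv, inv_inv, inv_inv,
    mul_comm a, mul_comm b] at hyoung

theorem lintegral_rpow_mul_lintegral_rpow_le_of_iSup_ne_top {l : ℝ} (hl₀ : 0 < l) (hl₁ : l < 1)
    {f g h : ℝ → ℝ≥0∞} (hf : Measurable f) (hg : Measurable g) (hh : Measurable h)
    (hf_top : ⨆ x, f x ≠ ⊤) (hg_top : ⨆ x, g x ≠ ⊤)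
    (hfgh : ∀ x y, f x ^ l * g y ^ (1 - l) ≤ h (l • x + (1 - l) • y)) :
    (∫⁻ x, f x) ^ l * (∫⁻ x, g x) ^ (1 - l) ≤ ∫⁻ x, h x := by
  have hl' : 0 < 1 - l := sub_pos.2 hl₁
  rcases eq_or_ne (⨆ x, f x) 0 with hf₀ | hf₀
  · simp [ENNReal.iSup_eq_zero.1 hf₀, hl₀]
  rcases eq_or_ne (⨆ x, g x) 0 with hg₀ | hg₀
  · simp [ENNReal.iSup_eq_zero.1 hg₀, hl₁]
  set S := ⨆ x, f x
  set T := ⨆ x, g x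
  have hSl₀ : S ^ l ≠ 0 := by simp [hf₀, hf_top]
  have hTl₀ : T ^ (1 - l) ≠ 0 := by simp [hg₀, hg_top]
  have hST₀ : S ^ l * T ^ (1 - l) ≠ 0 := mul_ne_zero hSl₀ hTl₀
  have hST : S ^ l * T ^ (1 - l) ≠ ⊤ := ENNReal.mul_ne_top
    (ENNReal.rpow_ne_top_of_nonneg hl₀.le hf_top) (ENNReal.rpow_ne_top_of_nonneg hl'.le hg_top)
  have hscale : ∀ a b : ℝ≥0∞, (a / S) ^ l * (b / T) ^ (1 - l) =
      a ^ l * b ^ (1 - l) / (S ^ l * T ^ (1 - l)) := fun a b => by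
    rw [ENNReal.div_rpow_of_nonneg _ _ hl₀.le, ENNReal.div_rpow_of_nonneg _ _ hl'.le,
      ENNReal.mul_div_mul_comm (.inl hSl₀) (.inr hTl₀)]
  have hnorm := ofReal_mul_lintegral_add_le_of_iSup_eq_one hl₀ hl₁ (hf.div_const S)
    (hg.div_const T) (hh.div_const (S ^ l * T ^ (1 - l)))
    (by rw [← ENNReal.iSup_div, ENNReal.div_self hf₀ hf_top])
    (by rw [← ENNReal.iSup_div, ENNReal.div_self hg₀ hg_top])
    fun x y => by
      rw [hscale]
      gcongr
      exact hfgh x y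
  refine (ENNReal.mul_le_mul_iff_left (ENNReal.inv_ne_zero.2 hST) (ENNReal.inv_ne_top.2 hST₀)).1 ?_
  calc (∫⁻ x, f x) ^ l * (∫⁻ x, g x) ^ (1 - l) * (S ^ l * T ^ (1 - l))⁻¹
      = (∫⁻ x, f x / S) ^ l * (∫⁻ x, g x / T) ^ (1 - l) := by
        simp only [div_eq_mul_inv, lintegral_mul_const _ hf, lintegral_mul_const _ hg]
        exact (hscale _ _).symm
    _ ≤ ENNReal.ofReal l * (∫⁻ x, f x / S) + ENNReal.ofReal (1 - l) * (∫⁻ x, g x / T) :=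
        rpow_mul_rpow_le_ofReal_mul_add hl₀ hl₁ _ _
    _ ≤ ∫⁻ x, h x / (S ^ l * T ^ (1 - l)) := hnorm
    _ = (∫⁻ x, h x) * (S ^ l * T ^ (1 - l))⁻¹ := by
        simp only [div_eq_mul_inv, lintegral_mul_const _ hh]

theorem lintegral_rpow_eq_iSup_lintegral_min_natCast_rpow {α : Type*} [MeasurableSpace α]
    {μ : Measure α} {u : α → ℝ≥0∞} (hu : Measurable u) {l : ℝ} (hl : 0 < l) :
    (∫⁻ x, u x ∂μ) ^ l = ⨆ n : ℕ, (∫⁻ x, min (u x) n ∂μ) ^ l := by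
  have hmin : ∀ x, u x = ⨆ n : ℕ, min (u x) n := fun x => by
    rw [← inf_iSup_eq, ENNReal.iSup_natCast, inf_top_eq]
  have hmono : Monotone fun (n : ℕ) x => min (u x) n := fun m n hmn x => by
    dsimp only
    gcongr
  calc (∫⁻ x, u x ∂μ) ^ l = (∫⁻ x, ⨆ n : ℕ, min (u x) n ∂μ) ^ l := by simp only [← hmin]
    _ = (⨆ n : ℕ, ∫⁻ x, min (u x) n ∂μ) ^ l := by
        rw [lintegral_iSup (fun n => hu.min measurable_const) hmono]
    _ = ⨆ n : ℕ, (∫⁻ x, min (u x) n ∂μ) ^ l := (ENNReal.orderIsoRpow l hl).map_iSup _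

theorem lintegral_rpow_mul_lintegral_rpow_le {l : ℝ} (hl₀ : 0 < l) (hl₁ : l < 1)
    {f g h : ℝ → ℝ≥0∞} (hf : Measurable f) (hg : Measurable g) (hh : Measurable h)
    (hfgh : ∀ x y, f x ^ l * g y ^ (1 - l) ≤ h (l • x + (1 - l) • y)) :
    (∫⁻ x, f x) ^ l * (∫⁻ x, g x) ^ (1 - l) ≤ ∫⁻ x, h x := by
  have hl' : 0 < 1 - l := sub_pos.2 hl₁
  have hbdd : ∀ (u : ℝ → ℝ≥0∞) (n : ℕ), ⨆ x, min (u x) n ≠ ⊤ := fun u n =>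
    ne_top_of_le_ne_top (ENNReal.natCast_ne_top n) (iSup_le fun _ => min_le_right _ _)
  simp only [lintegral_rpow_eq_iSup_lintegral_min_natCast_rpow hf hl₀,
    lintegral_rpow_eq_iSup_lintegral_min_natCast_rpow hg hl', ENNReal.iSup_mul, ENNReal.mul_iSup]
  refine iSup₂_le fun n m => lintegral_rpow_mul_lintegral_rpow_le_of_iSup_ne_top hl₀ hl₁
    (hf.min measurable_const) (hg.min measurable_const) hh (hbdd f _) (hbdd g _)
    fun x y => le_trans ?_ (hfgh x y)
  gcongr <;> exact min_le_left _ _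

end PrekopaLeindler

section GaussianPrekopaLeindler

theorem gaussianPDFReal_rpow_mul_rpow (m : ℝ) {v : ℝ≥0} (hv : v ≠ 0) (l x y : ℝ) :
    gaussianPDFReal m v x ^ l * gaussianPDFReal m v y ^ (1 - l) =
      Real.exp (-(l * (1 - l) * (x - y) ^ 2 / (2 * v))) *
        gaussianPDFReal m v (l * x + (1 - l) * y) := by
  have hc : 0 < (√(2 * π * v))⁻¹ := by positivity
  have hv' : (v : ℝ) ≠ 0 := by exact_mod_cast hv
  have hexp : Real.exp (-(x - m) ^ 2 / (2 * v)) ^ l * Real.exp (-(y - m) ^ 2 / (2 * v)) ^ (1 - l) =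
      Real.exp (-(l * (1 - l) * (x - y) ^ 2 / (2 * v))) *
        Real.exp (-(l * x + (1 - l) * y - m) ^ 2 / (2 * v)) := by
    rw [← Real.exp_mul, ← Real.exp_mul, ← Real.exp_add, ← Real.exp_add]
    congr 1
    field_simp
    ring
  simp only [gaussianPDFReal]
  rw [Real.mul_rpow hc.le (Real.exp_nonneg _), Real.mul_rpow hc.le (Real.exp_nonneg _),
    mul_mul_mul_comm, ← Real.rpow_add hc, add_sub_cancel, Real.rpow_one, hexp]
  ring

/-- The Prékopa–Leindler inequality for the measure `μ` with coefficient `l`, in which the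
hypothesis on `h` at `l • x + (1 - l) • y` is relaxed by the factor `κ x y`. For Lebesgue measure
`κ = 1`; for a Gaussian measure `κ x y < 1` off the diagonal, which encodes its strict
log-concavity. -/
def SatisfiesPrekopaLeindler {E : Type*} [AddCommMonoid E] [Module ℝ E] [MeasurableSpace E]
    (μ : Measure E) (l : ℝ) (κ : E → E → ℝ≥0∞) : Prop :=
  ∀ ⦃f g h : E → ℝ≥0∞⦄, Measurable f → Measurable g → Measurable h →
    (∀ x y, κ x y * (f x ^ l * g y ^ (1 - l)) ≤ h (l • x + (1 - l) • y)) →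
      (∫⁻ x, f x ∂μ) ^ l * (∫⁻ x, g x ∂μ) ^ (1 - l) ≤ ∫⁻ x, h x ∂μ

namespace SatisfiesPrekopaLeindler

variable {E F : Type*} [AddCommMonoid E] [Module ℝ E] [MeasurableSpace E]
  [AddCommMonoid F] [Module ℝ F] [MeasurableSpace F] {l : ℝ}

theorem volume_real (hl₀ : 0 < l) (hl₁ : l < 1) :
    SatisfiesPrekopaLeindler (volume : Measure ℝ) l fun _ _ => 1 := fun _ _ _ hf hg hh hfgh =>
  lintegral_rpow_mul_lintegral_rpow_le hl₀ hl₁ hf hg hh fun x y =>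
    (one_mul _).symm.trans_le (hfgh x y)

theorem withDensity {μ : Measure E} {κ κ' : E → E → ℝ≥0∞} (hμ : SatisfiesPrekopaLeindler μ l κ)
    (hl₀ : 0 ≤ l) (hl₁ : l ≤ 1) {w : E → ℝ≥0∞} (hw : Measurable w)
    (hκ : ∀ x y, κ x y * (w x ^ l * w y ^ (1 - l)) ≤ κ' x y * w (l • x + (1 - l) • y)) :
    SatisfiesPrekopaLeindler (μ.withDensity w) l κ' := fun f g h hf hg hh hfgh => by
  rw [lintegral_withDensity_eq_lintegral_mul _ hw hf,
    lintegral_withDensity_eq_lintegral_mul _ hw hg,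
    lintegral_withDensity_eq_lintegral_mul _ hw hh]
  refine hμ (hw.mul hf) (hw.mul hg) (hw.mul hh) fun x y => ?_
  calc κ x y * ((w x * f x) ^ l * (w y * g y) ^ (1 - l))
      = κ x y * (w x ^ l * w y ^ (1 - l)) * (f x ^ l * g y ^ (1 - l)) := by
        rw [ENNReal.mul_rpow_of_nonneg _ _ hl₀, ENNReal.mul_rpow_of_nonneg _ _ (sub_nonneg.2 hl₁)]
        ring
    _ ≤ κ' x y * w (l • x + (1 - l) • y) * (f x ^ l * g y ^ (1 - l)) := mul_le_mul_left (hκ x y) _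
    _ = w (l • x + (1 - l) • y) * (κ' x y * (f x ^ l * g y ^ (1 - l))) := by ring
    _ ≤ w (l • x + (1 - l) • y) * h (l • x + (1 - l) • y) := by gcongr; exact hfgh x y

theorem map {μ : Measure E} {κ : F → F → ℝ≥0∞} (T : E →ₗ[ℝ] F) (hT : Measurable T)
    (hμ : SatisfiesPrekopaLeindler μ l fun x y => κ (T x) (T y)) :
    SatisfiesPrekopaLeindler (μ.map T) l κ := fun f g h hf hg hh hfgh => by
  rw [lintegral_map hf hT, lintegral_map hg hT, lintegral_map hh hT]
  refine hμ (hf.comp hT) (hg.comp hT) (hh.comp hT) fun x y => ?_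
  rw [map_add, map_smul, map_smul]
  exact hfgh (T x) (T y)

theorem prod {μ : Measure E} {ν : Measure F} [SFinite ν] {κ : E → E → ℝ≥0∞} {κ' : F → F → ℝ≥0∞}
    (hl₀ : 0 < l) (hμ : SatisfiesPrekopaLeindler μ l κ) (hν : SatisfiesPrekopaLeindler ν l κ') :
    SatisfiesPrekopaLeindler (μ.prod ν) l fun x y => κ x.1 y.1 * κ' x.2 y.2 :=
  fun f g h hf hg hh hfgh => by
  rw [lintegral_prod _ hf.aemeasurable, lintegral_prod _ hg.aemeasurable,
    lintegral_prod _ hh.aemeasurable]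
  refine hμ hf.lintegral_prod_right' hg.lintegral_prod_right' hh.lintegral_prod_right' fun x y => ?_
  -- The factor `κ x y` is absorbed into the slice of `f` as `κ x y ^ l⁻¹`.
  have hroot : ∀ c : ℝ≥0∞, (κ x y ^ l⁻¹ * c) ^ l = κ x y * c ^ l := fun c => by
    rw [ENNReal.mul_rpow_of_nonneg _ _ hl₀.le, ENNReal.rpow_inv_rpow hl₀.ne']
  have hslice := hν (f := fun x₂ => κ x y ^ l⁻¹ * f (x, x₂)) (g := fun y₂ => g (y, y₂))
    (h := fun z₂ => h (l • x + (1 - l) • y, z₂)) (by fun_prop) (by fun_prop) (by fun_prop)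
    fun x₂ y₂ => by
      refine le_of_eq_of_le ?_ (hfgh (x, x₂) (y, y₂))
      rw [hroot]
      ring
  rwa [lintegral_const_mul _ (by fun_prop), hroot, mul_assoc] at hslice

theorem pi {n : ℕ} {E : Fin n → Type*} [∀ i, AddCommMonoid (E i)] [∀ i, Module ℝ (E i)]
    [∀ i, MeasurableSpace (E i)] {μ : ∀ i, Measure (E i)} [∀ i, SigmaFinite (μ i)]
    {κ : ∀ i, E i → E i → ℝ≥0∞} (hl₀ : 0 < l)
    (hμ : ∀ i, SatisfiesPrekopaLeindler (μ i) l (κ i)) :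
    SatisfiesPrekopaLeindler (Measure.pi μ) l fun x y => ∏ i, κ i (x i) (y i) := by
  induction n with
  | zero =>
    intro f g h _ _ _ hfgh
    simpa [Measure.pi_of_empty, Subsingleton.elim _ (default : ∀ i, E i)] using
      hfgh default default
  | succ n ih =>
    have hcons := (measurePreserving_piFinSuccAbove μ 0).symm
    have hcoe : ⇑(MeasurableEquiv.piFinSuccAbove E 0).symm = Fin.consLinearEquiv ℝ E :=
      funext fun _ => funext <| Fin.cases rfl fun _ => rfl
    rw [← hcons.map_eq, hcoe]
    refine map (κ := fun x y => ∏ i, κ i (x i) (y i)) (Fin.consLinearEquiv ℝ E).toLinearMap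
      (hcoe ▸ hcons.measurable) ?_
    simpa [Fin.prod_univ_succ] using! prod hl₀ (hμ 0) (ih fun i => hμ i.succ)

theorem gaussianReal (hl₀ : 0 < l) (hl₁ : l < 1) (m : ℝ) {v : ℝ≥0} (hv : v ≠ 0) :
    SatisfiesPrekopaLeindler (gaussianReal m v) l fun x y =>
      ENNReal.ofReal (Real.exp (-(l * (1 - l) * (x - y) ^ 2 / (2 * v)))) := by
  rw [gaussianReal_of_var_ne_zero m hv]
  refine withDensity (volume_real hl₀ hl₁) hl₀.le hl₁.le (measurable_gaussianPDF m v)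
    fun x y => le_of_eq ?_
  have hpdf : ∀ z, 0 < gaussianPDFReal m v z := fun z => gaussianPDFReal_pos m v z hv
  simp only [one_mul, gaussianPDF]
  rw [ENNReal.ofReal_rpow_of_pos (hpdf x), ENNReal.ofReal_rpow_of_pos (hpdf y),
    ← ENNReal.ofReal_mul (by have := hpdf x; positivity), ← ENNReal.ofReal_mul (Real.exp_nonneg _),
    gaussianPDFReal_rpow_mul_rpow m hv, smul_eq_mul, smul_eq_mul]

end SatisfiesPrekopaLeindler

theorem satisfiesPrekopaLeindler_stdGaussian (E : Type*) [NormedAddCommGroup E]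
    [InnerProductSpace ℝ E] [FiniteDimensional ℝ E] [MeasurableSpace E] [BorelSpace E] {l : ℝ}
    (hl₀ : 0 < l) (hl₁ : l < 1) :
    SatisfiesPrekopaLeindler (ProbabilityTheory.stdGaussian E) l fun x y =>
      ENNReal.ofReal (Real.exp (-(l * (1 - l) * ‖x - y‖ ^ 2 / 2))) := by
  set b := stdOrthonormalBasis ℝ E
  have hnorm : ∀ x y : Fin (Module.finrank ℝ E) → ℝ,
      ‖Fintype.linearCombination ℝ b x - Fintype.linearCombination ℝ b y‖ ^ 2 =
        ∑ i, (x i - y i) ^ 2 := fun x y => by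
    have hsum := b.sum_repr_symm (WithLp.toLp 2 (x - y))
    rw [← map_sub, Fintype.linearCombination_apply, hsum, b.repr.symm.norm_map,
      EuclideanSpace.real_norm_sq_eq]
    rfl
  have hκ : (fun x y : Fin (Module.finrank ℝ E) → ℝ => ENNReal.ofReal (Real.exp (-(l * (1 - l) *
      ‖Fintype.linearCombination ℝ b x - Fintype.linearCombination ℝ b y‖ ^ 2 / 2)))) =
      fun x y => ∏ i, ENNReal.ofReal (Real.exp
        (-(l * (1 - l) * (x i - y i) ^ 2 / (2 * (1 : ℝ≥0))))) := by
    ext x y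
    rw [hnorm, ← ENNReal.ofReal_prod_of_nonneg fun _ _ => Real.exp_nonneg _, ← Real.exp_sum]
    simp [Finset.mul_sum, Finset.sum_div]
  refine .map (κ := fun x y => ENNReal.ofReal (Real.exp (-(l * (1 - l) * ‖x - y‖ ^ 2 / 2))))
    (Fintype.linearCombination ℝ b) (LinearMap.continuous_of_finiteDimensional _).measurable ?_
  rw [hκ]
  exact .pi hl₀ fun _ => .gaussianReal hl₀ hl₁ 0 one_ne_zero

end GaussianPrekopaLeindler

section LipschitzOnSmallSets

theorem rpow_le_mul_exp_of_le_add {a b r k t : ℝ} (ha : 0 ≤ a) (hk : 0 < k) (ht : 0 < t)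
    (hab : a ≤ b + r) :
    a ^ k ≤ (b ^ 2 + k * t) ^ (k / 2) * Real.exp (r ^ 2 / (2 * t)) := by
  have hcauchy : (b + r) ^ 2 ≤ (b ^ 2 + k * t) * (r ^ 2 / (k * t) + 1) := by
    have hdefect : (b ^ 2 + k * t) * (r ^ 2 / (k * t) + 1) - (b + r) ^ 2 =
        (b * r - k * t) ^ 2 / (k * t) := by
      field_simp
      ring
    exact sub_nonneg.1 (hdefect ▸ by positivity)
  have hsq : a ^ 2 ≤ (b ^ 2 + k * t) * Real.exp (r ^ 2 / (k * t)) :=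
    calc a ^ 2 ≤ (b + r) ^ 2 := by gcongr
      _ ≤ (b ^ 2 + k * t) * (r ^ 2 / (k * t) + 1) := hcauchy
      _ ≤ (b ^ 2 + k * t) * Real.exp (r ^ 2 / (k * t)) := by
          gcongr
          exact Real.add_one_le_exp _
  calc a ^ k = (a ^ 2) ^ (k / 2) := by
        rw [← Real.rpow_natCast_mul ha, Nat.cast_ofNat, mul_div_cancel₀ k two_ne_zero]
    _ ≤ ((b ^ 2 + k * t) * Real.exp (r ^ 2 / (k * t))) ^ (k / 2) := by gcongr
    _ = (b ^ 2 + k * t) ^ (k / 2) * Real.exp (r ^ 2 / (2 * t)) := by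
        rw [Real.mul_rpow (by positivity) (Real.exp_nonneg _), ← Real.exp_mul]
        congr 2
        field_simp

theorem rpow_le_mul_exp_of_lipschitzWith_one {E : Type*} [SeminormedAddCommGroup E]
    {f : E → ℝ≥0} (hf : LipschitzWith 1 f) {k t : ℝ} (hk : 0 < k) (ht : 0 < t) (x y : E) :
    (f x : ℝ≥0∞) ^ k ≤ ((f y : ℝ≥0∞) ^ 2 + ENNReal.ofReal (k * t)) ^ (k / 2) *
      ENNReal.ofReal (Real.exp (‖x - y‖ ^ 2 / (2 * t))) := by
  have hlip : (f x : ℝ) ≤ f y + ‖x - y‖ := by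
    have hdist := hf.dist_le_mul x y
    rw [NNReal.dist_eq, NNReal.coe_one, one_mul, dist_eq_norm] at hdist
    exact sub_le_iff_le_add'.1 ((le_abs_self _).trans hdist)
  have hpow := ENNReal.ofReal_le_ofReal
    (rpow_le_mul_exp_of_le_add (NNReal.coe_nonneg (f x)) hk ht hlip)
  have hkt : 0 ≤ k * t := by positivity
  rwa [ENNReal.ofReal_mul (by positivity),
    ← ENNReal.ofReal_rpow_of_nonneg (NNReal.coe_nonneg (f x)) hk.le,
    ← ENNReal.ofReal_rpow_of_nonneg (by positivity) (by positivity),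
    ENNReal.ofReal_add (by positivity) hkt, ENNReal.ofReal_pow (NNReal.coe_nonneg (f y)),
    ENNReal.ofReal_coe_nnreal, ENNReal.ofReal_coe_nnreal] at hpow

/- Both sides of the hypothesis agree at `t = 0`, so their derivatives there compare; `k > 2` makes
`(k * t) ^ (k / 2)` negligible to first order. -/
theorem mul_log_inv_le_of_forall_rpow_mul_le {n p k : ℝ} (hn : 0 ≤ n) (hp : 0 < p) (hk : 2 < k)
    (h : ∀ t > 0, p ^ (1 + t)⁻¹ * n ^ (k / 2) ≤
      p * (n + k * t) ^ (k / 2) + (k * t) ^ (k / 2)) :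
    n * Real.log p⁻¹ ≤ k ^ 2 / 2 := by
  rcases hn.eq_or_lt with rfl | hn
  · rw [zero_mul]
    positivity
  have hq : 1 < k / 2 := by linarith
  set q := k / 2 with hqk
  have hq₀ : (0 : ℝ) ^ q = 0 := Real.zero_rpow (by linarith)
  have hq₁ : (0 : ℝ) ^ (q - 1) = 0 := Real.zero_rpow (by linarith)
  let φ : ℝ → ℝ := fun t => p * (n + k * t) ^ q + (k * t) ^ q - p ^ (1 + t)⁻¹ * n ^ q
  have hφ_zero : φ 0 = 0 := by simp [φ, hq₀]
  have hφ_nonneg : ∀ t > 0, 0 ≤ φ t := fun t ht => sub_nonneg.2 (h t ht)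
  have hφ_deriv : HasDerivAt φ (p * n ^ (q - 1) * (k * q - n * Real.log p⁻¹)) 0 := by
    have hlin : HasDerivAt (fun t : ℝ => k * t) k 0 := by
      simpa using (hasDerivAt_id (0 : ℝ)).const_mul k
    have hinv : HasDerivAt (fun t : ℝ => (1 + t)⁻¹) (-1) 0 := by
      simpa using ((hasDerivAt_id (0 : ℝ)).const_add 1).fun_inv (by simp)
    refine ((((hlin.const_add n).rpow_const (.inr hq.le)).const_mul p).add
      (hlin.rpow_const (.inr hq.le))).sub ((hinv.const_rpow hp).mul_const (n ^ q))
      |>.congr_deriv ?_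
    have hnq : n ^ q = n ^ (q - 1) * n := by rw [← Real.rpow_add_one hn.ne', sub_add_cancel]
    rw [mul_zero, hq₁, hnq, Real.log_inv]
    simp
    ring
  have hderiv_nonneg := ge_of_tendsto
    ((hasDerivWithinAt_iff_tendsto_slope' (s := Ioi 0) (by simp)).1 hφ_deriv.hasDerivWithinAt)
    (b := 0) (by
      filter_upwards [self_mem_nhdsWithin] with t ht
      rw [slope_def_field, hφ_zero, sub_zero, sub_zero]
      exact div_nonneg (hφ_nonneg t ht) (le_of_lt ht))
  have hfactor := nonneg_of_mul_nonneg_right hderiv_nonneg (by positivity)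
  rw [hqk] at hfactor
  linarith

section Integral

variable {α : Type*} [MeasurableSpace α] {μ : Measure α}

theorem rpow_lintegral_le_lintegral_rpow [IsProbabilityMeasure μ] {u : α → ℝ≥0∞}
    (hu : Measurable u) {p : ℝ} (hp : 1 ≤ p) : (∫⁻ x, u x ∂μ) ^ p ≤ ∫⁻ x, u x ^ p ∂μ := by
  have hp₀ : 0 < p := by linarith
  rw [← ENNReal.le_rpow_inv_iff hp₀]
  simpa [eLpNorm'] using
    eLpNorm'_le_eLpNorm'_of_exponent_le (f := u) zero_lt_one hp μ hu.aestronglyMeasurable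

theorem lintegral_add_const_rpow_le [IsProbabilityMeasure μ] {u : α → ℝ≥0∞}
    (hu : Measurable u) (c : ℝ≥0∞) {q : ℝ} (hq : 1 ≤ q) :
    ∫⁻ x, (u x + c) ^ q ∂μ ≤ ((∫⁻ x, u x ^ q ∂μ) ^ q⁻¹ + c) ^ q := by
  have hq₀ : 0 < q := by linarith
  have hmink := ENNReal.lintegral_Lp_add_le hu.aemeasurable
    (aemeasurable_const (μ := μ) (b := c)) hq
  rw [← ENNReal.rpow_inv_le_iff hq₀]
  simpa [hq₀.ne', ENNReal.rpow_rpow_inv] using hmink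

theorem measure_mul_lintegral_cond [IsFiniteMeasure μ] (s : Set α) (u : α → ℝ≥0∞) :
    μ s * ∫⁻ x, u x ∂μ[|s] = ∫⁻ x in s, u x ∂μ := by
  rcases eq_or_ne (μ s) 0 with hs | hs
  · rw [hs, zero_mul, setLIntegral_measure_zero s u hs]
  · rw [ProbabilityTheory.cond, lintegral_smul_measure, smul_eq_mul, ← mul_assoc,
      ENNReal.mul_inv_cancel hs (measure_ne_top μ s), one_mul]

theorem measure_mul_rpow_lintegral_cond_le [IsFiniteMeasure μ] {s : Set α} (hs : μ s ≠ 0)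
    {u : α → ℝ≥0∞} (hu : Measurable u) {p : ℝ} (hp : 1 ≤ p) :
    μ s * (∫⁻ x, u x ∂μ[|s]) ^ p ≤ ∫⁻ x, u x ^ p ∂μ := by
  have := cond_isProbabilityMeasure hs
  calc μ s * (∫⁻ x, u x ∂μ[|s]) ^ p ≤ μ s * ∫⁻ x, u x ^ p ∂μ[|s] := by
        gcongr
        exact rpow_lintegral_le_lintegral_rpow hu hp
    _ = ∫⁻ x in s, u x ^ p ∂μ := measure_mul_lintegral_cond s _
    _ ≤ ∫⁻ x, u x ^ p ∂μ := setLIntegral_le_lintegral _ _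

theorem lintegral_add_const_rpow_le_measure_mul_add [IsProbabilityMeasure μ] {s : Set α}
    (hs : MeasurableSet s) (hs₀ : μ s ≠ 0) {u : α → ℝ≥0∞} (hu : Measurable u)
    (hus : ∀ x ∉ s, u x = 0) (c : ℝ≥0∞) {q : ℝ} (hq : 1 ≤ q) :
    ∫⁻ x, (u x + c) ^ q ∂μ ≤ μ s * ((∫⁻ x, u x ^ q ∂μ[|s]) ^ q⁻¹ + c) ^ q + c ^ q := by
  have := cond_isProbabilityMeasure hs₀
  have hcompl : ∫⁻ x in sᶜ, (u x + c) ^ q ∂μ ≤ c ^ q :=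
    calc ∫⁻ x in sᶜ, (u x + c) ^ q ∂μ = ∫⁻ _ in sᶜ, c ^ q ∂μ :=
          setLIntegral_congr_fun hs.compl fun x hx => by simp [hus x hx]
      _ ≤ ∫⁻ _, c ^ q ∂μ := setLIntegral_le_lintegral _ _
      _ = c ^ q := by simp
  rw [← lintegral_add_compl _ hs, ← measure_mul_lintegral_cond]
  gcongr
  exact lintegral_add_const_rpow_le hu c hq

end Integral

variable {E : Type*} [NormedAddCommGroup E] [InnerProductSpace ℝ E] [FiniteDimensional ℝ E]
  [MeasurableSpace E] [BorelSpace E]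

/- The largest `G` allowed here is `exp` of the Hopf–Lax infimum convolution of `log F`, so this is
the Gaussian hypercontractivity of the Hopf–Lax semigroup. -/
theorem lintegral_rpow_stdGaussian_le {t : ℝ} (ht : 0 < t) {F G : E → ℝ≥0∞} (hF : Measurable F)
    (hG : Measurable G)
    (hGF : ∀ x y, G x ≤ F y * ENNReal.ofReal (Real.exp (‖x - y‖ ^ 2 / (2 * t)))) :
    ∫⁻ x, G x ^ (1 + t) ∂ProbabilityTheory.stdGaussian E ≤
      (∫⁻ x, F x ∂ProbabilityTheory.stdGaussian E) ^ (1 + t) := by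
  have ht₁ : 0 < 1 + t := by linarith
  set l := (1 + t)⁻¹ with hl
  have hl₀ : 0 < l := inv_pos.2 ht₁
  have hl₁ : l < 1 := inv_lt_one_of_one_lt₀ (by linarith)
  have hl_comp : 1 - l = l * t := by
    rw [hl]
    field_simp
    ring
  have hexp : ∀ x y : E, ‖x - (l • x + (1 - l) • y)‖ ^ 2 / (2 * t) =
      l * (1 - l) * ‖x - y‖ ^ 2 / 2 := fun x y => by
    have hxy : x - (l • x + (1 - l) • y) = (1 - l) • (x - y) := by module
    rw [hxy, norm_smul, mul_pow, Real.norm_eq_abs, sq_abs, hl_comp]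
    field_simp
  have hPL := satisfiesPrekopaLeindler_stdGaussian E hl₀ hl₁ (f := fun x => G x ^ (1 + t))
    (g := fun _ => 1) (h := F) (by fun_prop) measurable_const hF fun x y => by
      rw [ENNReal.one_rpow, mul_one, hl, ENNReal.rpow_rpow_inv ht₁.ne', ← hl]
      calc ENNReal.ofReal (Real.exp (-(l * (1 - l) * ‖x - y‖ ^ 2 / 2))) * G x
          ≤ ENNReal.ofReal (Real.exp (-(l * (1 - l) * ‖x - y‖ ^ 2 / 2))) *
              (F (l • x + (1 - l) • y) *
                ENNReal.ofReal (Real.exp (l * (1 - l) * ‖x - y‖ ^ 2 / 2))) := by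
            gcongr
            exact hexp x y ▸ hGF x _
        _ = F (l • x + (1 - l) • y) := by
            rw [mul_left_comm, ← ENNReal.ofReal_mul (Real.exp_nonneg _), ← Real.exp_add,
              neg_add_cancel, Real.exp_zero, ENNReal.ofReal_one, mul_one]
  rw [← ENNReal.rpow_inv_le_iff ht₁]
  simpa using hPL

theorem lintegral_rpow_stdGaussian_lt_top {f : E → ℝ≥0} (hf : LipschitzWith 1 f) {k : ℝ}
    (hk : 0 < k) : ∫⁻ x, (f x : ℝ≥0∞) ^ k ∂ProbabilityTheory.stdGaussian E < ⊤ := by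
  have hid : MemLp id (ENNReal.ofReal k) (ProbabilityTheory.stdGaussian E) :=
    IsGaussian.memLp_id _ _ ENNReal.ofReal_ne_top
  have hbound : MemLp (fun x => (f x : ℝ)) (ENNReal.ofReal k) (ProbabilityTheory.stdGaussian E) :=
    ((memLp_const (f 0 : ℝ)).add hid.norm).mono (by have := hf.continuous; fun_prop)
      (.of_forall fun x => by
        have hdist := hf.dist_le_mul x 0
        rw [NNReal.dist_eq, NNReal.coe_one, one_mul, dist_zero_right] at hdist
        simp only [Pi.add_apply, id, Real.norm_eq_abs, NNReal.abs_eq]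
        rw [abs_of_nonneg (by positivity)]
        exact sub_le_iff_le_add'.1 ((le_abs_self _).trans hdist))
  have := lintegral_rpow_enorm_lt_top_of_eLpNorm_lt_top (by simpa) ENNReal.ofReal_ne_top hbound.2
  simpa [ENNReal.toReal_ofReal hk.le] using this

variable {B : Set E} {f : E → ℝ≥0}

theorem rpow_mul_lintegral_cond_stdGaussian_le (hB : MeasurableSet B)
    (hB₀ : ProbabilityTheory.stdGaussian E B ≠ 0) (hf : LipschitzWith 1 f)
    (hfB : ∀ x ∉ B, f x = 0) {k t : ℝ} (hk : 2 ≤ k) (ht : 0 < t) :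
    ProbabilityTheory.stdGaussian E B ^ (1 + t)⁻¹ *
        ∫⁻ x, (f x : ℝ≥0∞) ^ k ∂(ProbabilityTheory.stdGaussian E)[|B] ≤
      ProbabilityTheory.stdGaussian E B *
          ((∫⁻ x, (f x : ℝ≥0∞) ^ k ∂(ProbabilityTheory.stdGaussian E)[|B]) ^ (k / 2)⁻¹ +
            ENNReal.ofReal (k * t)) ^ (k / 2) +
        ENNReal.ofReal (k * t) ^ (k / 2) := by
  set ν := ProbabilityTheory.stdGaussian E
  have ht₁ : 0 < 1 + t := by linarith
  have hfm : Measurable f := hf.continuous.measurable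
  have hsq : ∀ x, ((f x : ℝ≥0∞) ^ 2) ^ (k / 2) = (f x : ℝ≥0∞) ^ k := fun x => by
    rw [← ENNReal.rpow_natCast_mul, Nat.cast_ofNat, mul_div_cancel₀ k two_ne_zero]
  rw [← ENNReal.rpow_le_rpow_iff ht₁, ENNReal.mul_rpow_of_nonneg _ _ ht₁.le,
    ENNReal.rpow_inv_rpow ht₁.ne']
  have hsplit := lintegral_add_const_rpow_le_measure_mul_add (μ := ν) hB hB₀
    (u := fun x => (f x : ℝ≥0∞) ^ 2) (by fun_prop) (fun x hx => by simp [hfB x hx])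
    (ENNReal.ofReal (k * t)) (q := k / 2) (by linarith)
  simp only [hsq] at hsplit
  calc ν B * (∫⁻ x, (f x : ℝ≥0∞) ^ k ∂ν[|B]) ^ (1 + t)
      ≤ ∫⁻ x, ((f x : ℝ≥0∞) ^ k) ^ (1 + t) ∂ν :=
        measure_mul_rpow_lintegral_cond_le hB₀ (by fun_prop) (by linarith)
    _ ≤ (∫⁻ x, ((f x : ℝ≥0∞) ^ 2 + ENNReal.ofReal (k * t)) ^ (k / 2) ∂ν) ^ (1 + t) :=
        lintegral_rpow_stdGaussian_le ht (by fun_prop) (by fun_prop)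
          (rpow_le_mul_exp_of_lipschitzWith_one hf (by linarith) ht)
    _ ≤ (ν B * ((∫⁻ x, (f x : ℝ≥0∞) ^ k ∂ν[|B]) ^ (k / 2)⁻¹ + ENNReal.ofReal (k * t)) ^ (k / 2) +
          ENNReal.ofReal (k * t) ^ (k / 2)) ^ (1 + t) := ENNReal.rpow_le_rpow hsplit ht₁.le

theorem mul_log_inv_le_of_lintegral_cond_stdGaussian_eq (hB : MeasurableSet B)
    (hB₀ : ProbabilityTheory.stdGaussian E B ≠ 0) (hf : LipschitzWith 1 f)
    (hfB : ∀ x ∉ B, f x = 0) {k : ℝ} (hk : 2 < k) {n : ℝ≥0}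
    (hn : ∫⁻ x, (f x : ℝ≥0∞) ^ k ∂(ProbabilityTheory.stdGaussian E)[|B] =
      (n : ℝ≥0∞) ^ (k / 2)) :
    n * Real.log ((ProbabilityTheory.stdGaussian E).real B)⁻¹ ≤ k ^ 2 / 2 := by
  refine mul_log_inv_le_of_forall_rpow_mul_le n.coe_nonneg (ENNReal.toReal_pos hB₀ (by finiteness))
    hk fun t ht => ?_
  have hkt : 0 ≤ k * t := by positivity
  have hgauss := rpow_mul_lintegral_cond_stdGaussian_le hB hB₀ hf hfB hk.le ht
  rw [hn, ENNReal.rpow_rpow_inv (by linarith)] at hgauss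
  have hreal := ENNReal.toReal_mono (by finiteness) hgauss
  rwa [ENNReal.toReal_mul, ENNReal.toReal_add (by finiteness) (by finiteness),
    ENNReal.toReal_mul, ← ENNReal.toReal_rpow, ← ENNReal.toReal_rpow, ← ENNReal.toReal_rpow,
    ← ENNReal.toReal_rpow, ENNReal.toReal_add (by finiteness) (by finiteness),
    ENNReal.toReal_ofReal hkt, ENNReal.coe_toReal] at hreal

theorem lintegral_cond_stdGaussian_le_div_sqrt (hB : MeasurableSet B)
    (hB₀ : ProbabilityTheory.stdGaussian E B ≠ 0)
    (hB₁ : (ProbabilityTheory.stdGaussian E).real B < 1) (hf : LipschitzWith 1 f)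
    (hfB : ∀ x ∉ B, f x = 0) {k : ℝ} (hk : 2 < k) :
    ∫⁻ x, f x ∂(ProbabilityTheory.stdGaussian E)[|B] ≤
      ENNReal.ofReal (k / √(2 * Real.log ((ProbabilityTheory.stdGaussian E).real B)⁻¹)) := by
  set ν := ProbabilityTheory.stdGaussian E
  have hμ := cond_isProbabilityMeasure hB₀
  have hfm : Measurable f := hf.continuous.measurable
  have hp : 0 < ν.real B := measureReal_def ν B ▸ ENNReal.toReal_pos hB₀ (measure_ne_top ν B)
  have hlog : 0 < Real.log (ν.real B)⁻¹ := Real.log_pos ((one_lt_inv₀ hp).2 hB₁)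
  have hI_top : ∫⁻ x, (f x : ℝ≥0∞) ^ k ∂ν[|B] ≠ ⊤ := fun h => by
    have hmul := measure_mul_lintegral_cond (μ := ν) B fun x => (f x : ℝ≥0∞) ^ k
    rw [h, ENNReal.mul_top hB₀] at hmul
    exact ((setLIntegral_le_lintegral _ _).trans_lt
      (lintegral_rpow_stdGaussian_lt_top hf (by linarith))).ne hmul.symm
  obtain ⟨n, hn⟩ : ∃ n : ℝ≥0, ∫⁻ x, (f x : ℝ≥0∞) ^ k ∂ν[|B] = (n : ℝ≥0∞) ^ (k / 2) := by
    refine ⟨((∫⁻ x, (f x : ℝ≥0∞) ^ k ∂ν[|B]) ^ (k / 2)⁻¹).toNNReal, ?_⟩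
    rw [ENNReal.coe_toNNReal (by finiteness), ENNReal.rpow_inv_rpow (by linarith)]
  have hn_le := mul_log_inv_le_of_lintegral_cond_stdGaussian_eq hB hB₀ hf hfB hk hn
  calc ∫⁻ x, f x ∂ν[|B] ≤ (n : ℝ≥0∞) ^ (2 : ℝ)⁻¹ := by
        have hhalf : (2 : ℝ)⁻¹ = k / 2 * k⁻¹ := by field_simp
        rw [hhalf, ENNReal.rpow_mul, ← hn, ENNReal.le_rpow_inv_iff (by linarith)]
        exact rpow_lintegral_le_lintegral_rpow (by fun_prop) (by linarith)
    _ = ENNReal.ofReal √n := by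
        rw [Real.sqrt_eq_rpow, ← ENNReal.ofReal_rpow_of_nonneg n.coe_nonneg (by positivity),
          ENNReal.ofReal_coe_nnreal, one_div]
    _ ≤ ENNReal.ofReal (k / √(2 * Real.log (ν.real B)⁻¹)) := by
        gcongr
        rw [le_div_iff₀ (by positivity), ← Real.sqrt_mul (by positivity)]
        exact Real.sqrt_le_iff.2 ⟨by linarith, by linarith⟩

theorem setLIntegral_stdGaussian_le (hB : MeasurableSet B) {p : ℝ}
    (hBp : (ProbabilityTheory.stdGaussian E).real B ≤ p) (hp : p < 1) (hf : LipschitzWith 1 f)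
    (hfB : ∀ x ∉ B, f x = 0) :
    ∫⁻ x in B, f x ∂ProbabilityTheory.stdGaussian E ≤
      ProbabilityTheory.stdGaussian E B * ENNReal.ofReal (2 / √(2 * Real.log p⁻¹)) := by
  set ν := ProbabilityTheory.stdGaussian E
  rcases eq_or_ne (ν B) 0 with hB₀ | hB₀
  · rw [setLIntegral_measure_zero B _ hB₀]
    exact zero_le
  have hB_pos : 0 < ν.real B := measureReal_def ν B ▸ ENNReal.toReal_pos hB₀ (measure_ne_top ν B)
  have hp_pos : 0 < p := hB_pos.trans_le hBp
  have hlog : 0 < Real.log p⁻¹ := Real.log_pos ((one_lt_inv₀ hp_pos).2 hp)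
  have hlim : Filter.Tendsto
      (fun k => ENNReal.ofReal (k / √(2 * Real.log (ν.real B)⁻¹))) (𝓝[>] 2)
      (𝓝 (ENNReal.ofReal (2 / √(2 * Real.log (ν.real B)⁻¹)))) :=
    ((ENNReal.continuous_ofReal.comp (continuous_id.div_const _)).tendsto 2).mono_left
      nhdsWithin_le_nhds
  rw [← measure_mul_lintegral_cond]
  gcongr
  calc ∫⁻ x, f x ∂ν[|B] ≤ ENNReal.ofReal (2 / √(2 * Real.log (ν.real B)⁻¹)) :=
        ge_of_tendsto hlim <| by
          filter_upwards [self_mem_nhdsWithin] with k hk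
          exact lintegral_cond_stdGaussian_le_div_sqrt hB hB₀ (hBp.trans_lt hp) hf hfB hk
    _ ≤ ENNReal.ofReal (2 / √(2 * Real.log p⁻¹)) := by gcongr

end LipschitzOnSmallSets

section Robustness

theorem distSet_eq_infDist {d : ℕ} (z : Fin d → ℝ) (A : Set (Fin d → ℝ)) :
    distSet z A = Metric.infDist (WithLp.toLp 2 z) (WithLp.toLp 2 '' A) := by
  have hl2 : ∀ z', l2 (z - z') = dist (WithLp.toLp 2 z) (WithLp.toLp 2 z') := fun z' => by
    simp [l2, EuclideanSpace.dist_eq, Real.dist_eq]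
  rw [distSet, Metric.infDist_eq_iInf, ← sInf_image', image_image]
  refine congrArg sInf (Set.ext fun t => ?_)
  simp [hl2, eq_comm]

theorem measurePreserving_toLp_stdGaussian (d : ℕ) :
    MeasurePreserving (MeasurableEquiv.toLp 2 (Fin d → ℝ)) (_root_.stdGaussian d)
      (ProbabilityTheory.stdGaussian (EuclideanSpace ℝ (Fin d))) :=
  ⟨MeasurableEquiv.measurable _, map_pi_eq_stdGaussian⟩

instance isProbabilityMeasure_stdGaussian (d : ℕ) : IsProbabilityMeasure (_root_.stdGaussian d) :=
  inferInstanceAs (IsProbabilityMeasure (Measure.pi _))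

theorem setLIntegral_distSet_compl_le {d : ℕ} {B : Set (Fin d → ℝ)} (hB : MeasurableSet B) {p : ℝ}
    (hBp : (_root_.stdGaussian d).real B ≤ p) (hp : p < 1) :
    ∫⁻ z in B, ENNReal.ofReal (distSet z Bᶜ) ∂_root_.stdGaussian d ≤
      _root_.stdGaussian d B * ENNReal.ofReal (2 / √(2 * Real.log p⁻¹)) := by
  set e := MeasurableEquiv.toLp 2 (Fin d → ℝ)
  set ν := ProbabilityTheory.stdGaussian (EuclideanSpace ℝ (Fin d))
  have he : MeasurePreserving e (_root_.stdGaussian d) ν := measurePreserving_toLp_stdGaussian d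
  have hν : ν (e.symm ⁻¹' B) = _root_.stdGaussian d B := he.symm.measure_preimage_equiv B
  have hdist : ∀ z, ENNReal.ofReal (distSet z Bᶜ) = Metric.infNndist (e z) (e.symm ⁻¹' B)ᶜ :=
    fun z => by
      rw [distSet_eq_infDist, ← preimage_compl, ← e.image_eq_preimage_symm,
        ← ENNReal.ofReal_coe_nnreal, Metric.coe_infNndist]
      rfl
  calc ∫⁻ z in B, ENNReal.ofReal (distSet z Bᶜ) ∂_root_.stdGaussian d
      = ∫⁻ z in e ⁻¹' (e.symm ⁻¹' B), Metric.infNndist (e z) (e.symm ⁻¹' B)ᶜ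
          ∂_root_.stdGaussian d := by simp only [hdist]; rfl
    _ = ∫⁻ x in e.symm ⁻¹' B, Metric.infNndist x (e.symm ⁻¹' B)ᶜ ∂ν :=
        he.setLIntegral_comp_preimage_emb e.measurableEmbedding
          (fun x => (Metric.infNndist x (e.symm ⁻¹' B)ᶜ : ℝ≥0∞)) _
    _ ≤ ν (e.symm ⁻¹' B) * ENNReal.ofReal (2 / √(2 * Real.log p⁻¹)) :=
        setLIntegral_stdGaussian_le (e.symm.measurable hB)
          (by rwa [measureReal_def, hν]) hp (Metric.lipschitz_infNndist_pt _) fun x hx => by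
            rw [← NNReal.coe_eq_zero, Metric.coe_infNndist, Metric.infDist_zero_of_mem hx]
    _ = _root_.stdGaussian d B * ENNReal.ofReal (2 / √(2 * Real.log p⁻¹)) := by rw [hν]

theorem distSet_nonneg {d : ℕ} (z : Fin d → ℝ) (A : Set (Fin d → ℝ)) : 0 ≤ distSet z A :=
  distSet_eq_infDist z A ▸ Metric.infDist_nonneg

theorem two_div_sqrt_two_mul_log_le {x : ℝ} (hx : 2 ≤ x) :
    2 / √(2 * Real.log x) ≤ Real.log (4 * π * Real.log x) / √(2 * Real.log x) := by
  gcongr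
  have hlog : Real.log 2 ≤ Real.log x := Real.log_le_log two_pos hx
  have hlog_pos : 0 < Real.log x := (Real.log_pos one_lt_two).trans_le hlog
  rw [Real.le_log_iff_exp_le (by positivity)]
  calc Real.exp 2 = Real.exp 1 ^ 2 := by rw [← Real.exp_nat_mul]; norm_num
    _ ≤ 2.7182818286 ^ 2 := by gcongr; exact Real.exp_one_lt_d9.le
    _ ≤ 4 * 3 * 0.6931471803 := by norm_num
    _ ≤ 4 * π * Real.log x := by
        gcongr
        · exact pi_gt_three.le
        · exact Real.log_two_gt_d9.le.trans hlog

theorem expected_latent_robustness_bound_equiprobable_general {d : ℕ} {ι : Type*} [Countable ι]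
    {B : ι → Set (Fin d → ℝ)} (hmeas : ∀ i, MeasurableSet (B i))
    (hdisj : Pairwise (Function.onFun Disjoint B)) (hcover : (⋃ i, B i) = Set.univ) {p : ℝ}
    (hp : p < 1) (hprob : ∀ i, ((_root_.stdGaussian d) (B i)).toReal ≤ p) :
    (∫ z, distSet z {z' | ∀ i, z ∈ B i → z' ∉ B i} ∂(_root_.stdGaussian d)) ≤
      2 / √(2 * Real.log p⁻¹) := by
  have hcell : ∀ i, ∀ z ∈ B i, {z' | ∀ j, z ∈ B j → z' ∉ B j} = (B i)ᶜ := fun i z hz => by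
    ext z'
    refine ⟨fun h => h i hz, fun h j hj => ?_⟩
    rwa [hdisj.eq (not_disjoint_iff.2 ⟨z, hj, hz⟩)]
  have hlintegral : ∫⁻ z, ENNReal.ofReal (distSet z {z' | ∀ i, z ∈ B i → z' ∉ B i})
      ∂(_root_.stdGaussian d) ≤ ENNReal.ofReal (2 / √(2 * Real.log p⁻¹)) :=
    calc ∫⁻ z, ENNReal.ofReal (distSet z {z' | ∀ i, z ∈ B i → z' ∉ B i}) ∂(_root_.stdGaussian d)
        = ∑' i, ∫⁻ z in B i, ENNReal.ofReal (distSet z {z' | ∀ j, z ∈ B j → z' ∉ B j})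
            ∂(_root_.stdGaussian d) := by
          rw [← lintegral_iUnion hmeas hdisj, hcover, Measure.restrict_univ]
      _ = ∑' i, ∫⁻ z in B i, ENNReal.ofReal (distSet z (B i)ᶜ) ∂(_root_.stdGaussian d) :=
          tsum_congr fun i => setLIntegral_congr_fun (hmeas i) fun z hz => by rw [hcell i z hz]
      _ ≤ ∑' i, _root_.stdGaussian d (B i) * ENNReal.ofReal (2 / √(2 * Real.log p⁻¹)) :=
          ENNReal.tsum_le_tsum fun i => setLIntegral_distSet_compl_le (hmeas i) (hprob i) hp
      _ = ENNReal.ofReal (2 / √(2 * Real.log p⁻¹)) := by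
          rw [ENNReal.tsum_mul_right, ← measure_iUnion hdisj hmeas, hcover, measure_univ, one_mul]
  refine (Real.le_norm_self _).trans ((norm_integral_le_lintegral_norm _).trans ?_)
  simp only [Real.norm_of_nonneg (distSet_nonneg _ _)]
  exact ENNReal.toReal_le_of_le_ofReal (by positivity) hlintegral

end Robustness

/-- Explicit bound on the expected latent-space robustness for `K ≥ 5` equiprobable
cells (Theorem 4). -/
theorem expected_latent_robustness_bound_equiprobable (d K : ℕ) (hK : 5 ≤ K)
    (B : Fin K → Set (Fin d → ℝ))
    (hmeas : ∀ i, MeasurableSet (B i))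
    (hdisj : Pairwise (Function.onFun Disjoint B))
    (hcover : (⋃ i, B i) = Set.univ)
    (hprob : ∀ i, ((stdGaussian d) (B i)).toReal = 1 / (K : ℝ)) :
    (∫ z, distSet z {z' | ∀ i, z ∈ B i → z' ∉ B i} ∂(stdGaussian d)) ≤
      Real.log (4 * π * Real.log K) / Real.sqrt (2 * Real.log K) := by
  have hK₂ : (2 : ℝ) ≤ K := by exact_mod_cast (by omega : 2 ≤ K)
  refine (expected_latent_robustness_bound_equiprobable_general hmeas hdisj hcover
    (p := (K : ℝ)⁻¹) (inv_lt_one_of_one_lt₀ (by linarith)) fun i => ?_).trans ?_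
  · rw [hprob i, one_div]
  · rw [inv_inv]
    exact two_div_sqrt_two_mul_log_le hK₂
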